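/- Consider the convex quadratic program min_x ½xᵀQx + cᵀx subject to Ax = b and x ≥ 0, where Q is a real symmetric positive-semidefinite n×n matrix, c ∈ ℝⁿ, A a real m×n matrix, and b ∈ ℝᵐ. Let {1,…,n} = 𝒢 ∪ 𝒱 be a partition of the index set. Suppose x_𝒢 ∈ ℝ^{|𝒢|}, y* ∈ ℝᵐ, and z_𝒢 ∈ ℝ^{|𝒢|} satisfy the KKT conditions of the reduced problem min ½uᵀQ^{𝒢,𝒢}u + (c^𝒢)ᵀu subject to A^{·,𝒢}u = b, u ≥ 0: namely x_𝒢 ≥ 0, A^{·,𝒢}x_𝒢 = b, z_𝒢 = c^𝒢 + Q^{𝒢,𝒢}x_𝒢 − (A^{·,𝒢})ᵀy* ≥ 0, and x_𝒢ⁱ·z_𝒢ⁱ = 0 for all i ∈ 𝒢. Define z_𝒱 = c^𝒱 + Q^{𝒱,𝒢}x_𝒢 − (A^{·,𝒱})ᵀy*. If z_𝒱 ≥ 0, then the vector x̂ ∈ ℝⁿ defined by x̂^𝒢 = x_𝒢 and x̂^𝒱 = 0 is a global minimizer of the full quadratic program. -/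

import Mathlib

open Matrix

/-!
For positive semidefinite `Q` the objective `f` lies above its linearisation at `x̂`. On
`{x | A x = b}` the gradient `c + Q x̂` and the reduced cost `z = c + Q x̂ - Aᵀ y` act alike on
differences, so `f x - f x̂ ≥ z ⬝ (x - x̂) = z ⬝ x ≥ 0` for all feasible `x`, by complementarity
and `z ≥ 0`. Since `A x̂` and `Q x̂` only see the kept entries of the padded point `x̂`, its reduced
cost is `z_𝒢` on the kept variables and `z_𝒱` on the dropped ones: the a-posteriori check is exactly
what a KKT point of the reduced program needs to be one of the full program.
-/

section Padding

theorem dite_zero_eq_extend_val {ι R : Type*} [Zero R] {p : ι → Prop} [DecidablePred p]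
    (u : {i // p i} → R) :
    (fun i ↦ if h : p i then u ⟨i, h⟩ else 0) = Function.extend Subtype.val u 0 := by
  ext i
  split_ifs with hi
  · rw [Function.extend_val_apply hi]
  · rw [Function.extend_val_apply' hi, Pi.zero_apply]

variable {ι κ μ R : Type*} [Fintype ι] [Fintype κ] [NonUnitalNonAssocSemiring R]

theorem dotProduct_extend_zero {e : κ → ι} (he : e.Injective) (v : ι → R) (u : κ → R) :
    v ⬝ᵥ Function.extend e u 0 = (v ∘ e) ⬝ᵥ u := by
  refine (Fintype.sum_of_injective e he _ _ (fun i hi ↦ ?_) fun k ↦ ?_).symm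
  · rw [Function.extend_apply' _ _ _ hi, Pi.zero_apply, mul_zero]
  · rw [he.extend_apply, Function.comp_apply]

theorem mulVec_extend_zero {e : κ → ι} (he : e.Injective) (M : Matrix μ ι R) (u : κ → R) :
    M *ᵥ Function.extend e u 0 = M.submatrix id e *ᵥ u :=
  funext fun i ↦ dotProduct_extend_zero he (M i) u

end Padding

/-- The data of the quadratic program `min ½ xᵀQx + cᵀx` subject to `A x = b` and `x ≥ 0`, with
variables indexed by `ι` and equality constraints by `μ`. Convexity is not part of the data. -/
structure QuadraticProgram (ι μ 𝕜 : Type*) where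
  Q : Matrix ι ι 𝕜
  c : ι → 𝕜
  A : Matrix μ ι 𝕜
  b : μ → 𝕜

namespace QuadraticProgram

section Definitions

variable {ι μ 𝕜 : Type*}

/-- The reduced program in the variables `κ`, obtained by dropping the variables outside the range
of `e`. -/
def restrict {κ : Type*} (P : QuadraticProgram ι μ 𝕜) (e : κ → ι) : QuadraticProgram κ μ 𝕜 where
  Q := P.Q.submatrix e e
  c := P.c ∘ e
  A := P.A.submatrix id e
  b := P.b

/-- The objective function `½ xᵀQx + cᵀx`. -/
def objective [Fintype ι] [Field 𝕜] (P : QuadraticProgram ι μ 𝕜) (x : ι → 𝕜) : 𝕜 :=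
  (1 / 2) * (x ⬝ᵥ (P.Q *ᵥ x)) + P.c ⬝ᵥ x

variable [Fintype ι] [CommRing 𝕜]

/-- The vector `c + Q x`, which is the gradient of the objective when `Q` is symmetric. -/
def gradient (P : QuadraticProgram ι μ 𝕜) (x : ι → 𝕜) : ι → 𝕜 :=
  P.c + P.Q *ᵥ x

/-- The dual slack `z = c + Q x - Aᵀ y` of a primal point `x` and a multiplier `y` of the equality
constraints. -/
def reducedCost [Fintype μ] (P : QuadraticProgram ι μ 𝕜) (x : ι → 𝕜) (y : μ → 𝕜) : ι → 𝕜 :=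
  P.gradient x - P.Aᵀ *ᵥ y

/-- The points satisfying all constraints of the program. -/
def feasibleSet [LE 𝕜] (P : QuadraticProgram ι μ 𝕜) : Set (ι → 𝕜) :=
  {x | P.A *ᵥ x = P.b ∧ 0 ≤ x}

/-- The Karush-Kuhn-Tucker conditions for a primal point `x` and a multiplier `y` of the equality
constraints. The multiplier of `x ≥ 0` is eliminated: stationarity forces it to be the reduced
cost. -/
structure IsKKTPoint [Fintype μ] [LE 𝕜] (P : QuadraticProgram ι μ 𝕜)
    (x : ι → 𝕜) (y : μ → 𝕜) : Prop where
  nonneg : 0 ≤ x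
  mulVec_eq : P.A *ᵥ x = P.b
  reducedCost_nonneg : 0 ≤ P.reducedCost x y
  mul_reducedCost_eq_zero : ∀ i, x i * P.reducedCost x y i = 0

end Definitions

section CommRing

variable {ι κ μ 𝕜 : Type*} [Fintype ι] [Fintype μ] [CommRing 𝕜] {P : QuadraticProgram ι μ 𝕜}

theorem reducedCost_dotProduct_sub {x w : ι → 𝕜} (h : P.A *ᵥ w = P.A *ᵥ x) (y : μ → 𝕜) :
    P.reducedCost x y ⬝ᵥ (w - x) = P.gradient x ⬝ᵥ (w - x) := by
  have multiplier_term : (P.Aᵀ *ᵥ y) ⬝ᵥ (w - x) = 0 := by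
    rw [dotProduct_comm, dotProduct_transpose_mulVec, mulVec_sub, h, sub_self, dotProduct_zero]
  rw [reducedCost, sub_dotProduct, multiplier_term, sub_zero]

variable [Fintype κ] {e : κ → ι}

theorem reducedCost_extend_zero (he : e.Injective) (u : κ → 𝕜) (y : μ → 𝕜) :
    P.reducedCost (Function.extend e u 0) y =
      P.c + P.Q.submatrix id e *ᵥ u - P.Aᵀ *ᵥ y := by
  rw [reducedCost, gradient, mulVec_extend_zero he]

theorem reducedCost_extend_zero_apply (he : e.Injective) (u : κ → 𝕜) (y : μ → 𝕜) (k : κ) :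
    P.reducedCost (Function.extend e u 0) y (e k) = (P.restrict e).reducedCost u y k := by
  rw [reducedCost_extend_zero he]
  rfl

theorem IsKKTPoint.extend_zero [Preorder 𝕜] (he : e.Injective) {u : κ → 𝕜} {y : μ → 𝕜}
    (h : (P.restrict e).IsKKTPoint u y)
    (hdropped : ∀ i ∉ Set.range e, 0 ≤ P.reducedCost (Function.extend e u 0) y i) :
    P.IsKKTPoint (Function.extend e u 0) y where
  nonneg := Function.extend_nonneg h.nonneg le_rfl
  mulVec_eq := (mulVec_extend_zero he P.A u).trans h.mulVec_eq
  reducedCost_nonneg i := by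
    by_cases hi : i ∈ Set.range e
    · obtain ⟨k, rfl⟩ := hi
      exact (h.reducedCost_nonneg k).trans_eq (reducedCost_extend_zero_apply he u y k).symm
    · exact hdropped i hi
  mul_reducedCost_eq_zero i := by
    by_cases hi : i ∈ Set.range e
    · obtain ⟨k, rfl⟩ := hi
      simpa only [he.extend_apply, reducedCost_extend_zero_apply he]
        using h.mul_reducedCost_eq_zero k
    · rw [Function.extend_apply' _ _ _ hi, Pi.zero_apply, zero_mul]

end CommRing

section Field

variable {ι μ 𝕜 : Type*} [Fintype ι] [Field 𝕜] {P : QuadraticProgram ι μ 𝕜}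

theorem objective_eq_taylor [NeZero (2 : 𝕜)] (hQ : P.Q.IsSymm) (x w : ι → 𝕜) :
    P.objective w = P.objective x + P.gradient x ⬝ᵥ (w - x) +
      (1 / 2) * ((w - x) ⬝ᵥ (P.Q *ᵥ (w - x))) := by
  have cross_symm : x ⬝ᵥ (P.Q *ᵥ w) = w ⬝ᵥ (P.Q *ᵥ x) := by
    rw [← dotProduct_transpose_mulVec, hQ.eq]
  simp only [objective, gradient, mulVec_sub, sub_dotProduct, dotProduct_sub, add_dotProduct,
    dotProduct_comm (P.Q *ᵥ x), cross_symm]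
  field_simp
  ring

variable [LinearOrder 𝕜] [IsStrictOrderedRing 𝕜] [StarRing 𝕜] [TrivialStar 𝕜]

theorem objective_add_gradient_dotProduct_sub_le (hQ : P.Q.PosSemidef) (x w : ι → 𝕜) :
    P.objective x + P.gradient x ⬝ᵥ (w - x) ≤ P.objective w := by
  have curvature_nonneg : 0 ≤ (w - x) ⬝ᵥ (P.Q *ᵥ (w - x)) := by
    simpa only [star_trivial] using hQ.dotProduct_mulVec_nonneg (w - x)
  rw [objective_eq_taylor (isHermitian_iff_isSymm.mp hQ.isHermitian) x w]
  exact le_add_of_nonneg_right (mul_nonneg one_half_pos.le curvature_nonneg)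

variable [Fintype μ]

theorem isMinOn_of_reducedCost_nonneg (hQ : P.Q.PosSemidef) {x : ι → 𝕜} {y : μ → 𝕜}
    (hx : P.A *ᵥ x = P.b) (hz : 0 ≤ P.reducedCost x y) (hxz : P.reducedCost x y ⬝ᵥ x = 0) :
    IsMinOn P.objective P.feasibleSet x := by
  rintro w ⟨hw, hw_nonneg⟩
  calc P.objective x
      ≤ P.objective x + P.reducedCost x y ⬝ᵥ w :=
        le_add_of_nonneg_right (dotProduct_nonneg_of_nonneg hz hw_nonneg)
    _ = P.objective x + P.reducedCost x y ⬝ᵥ (w - x) := by rw [dotProduct_sub, hxz, sub_zero]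
    _ = P.objective x + P.gradient x ⬝ᵥ (w - x) := by
        rw [reducedCost_dotProduct_sub (hw.trans hx.symm)]
    _ ≤ P.objective w := objective_add_gradient_dotProduct_sub_le hQ x w

theorem IsKKTPoint.isMinOn (hQ : P.Q.PosSemidef) {x : ι → 𝕜} {y : μ → 𝕜}
    (h : P.IsKKTPoint x y) : IsMinOn P.objective P.feasibleSet x := by
  refine isMinOn_of_reducedCost_nonneg hQ h.mulVec_eq h.reducedCost_nonneg ?_
  rw [dotProduct_comm]
  exact Finset.sum_eq_zero fun i _ ↦ h.mul_reducedCost_eq_zero i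

end Field

end QuadraticProgram

theorem dropped_variables_padding_is_global_minimizer_general {ι κ μ 𝕜 : Type*} [Fintype ι]
    [Fintype κ] [Fintype μ] [Field 𝕜] [LinearOrder 𝕜] [IsStrictOrderedRing 𝕜] [StarRing 𝕜]
    [TrivialStar 𝕜] {P : QuadraticProgram ι μ 𝕜} (hQ : P.Q.PosSemidef) {e : κ → ι}
    (he : e.Injective) {u : κ → 𝕜} {y : μ → 𝕜} (hu : (P.restrict e).IsKKTPoint u y)
    (hdropped : ∀ i ∉ Set.range e, 0 ≤ (P.c + P.Q.submatrix id e *ᵥ u - P.Aᵀ *ᵥ y) i) :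
    Function.extend e u 0 ∈ P.feasibleSet ∧
      IsMinOn P.objective P.feasibleSet (Function.extend e u 0) := by
  rw [← QuadraticProgram.reducedCost_extend_zero he] at hdropped
  have padded_isKKTPoint := hu.extend_zero he hdropped
  exact ⟨⟨padded_isKKTPoint.mulVec_eq, padded_isKKTPoint.nonneg⟩, padded_isKKTPoint.isMinOn hQ⟩

/-- Correctness of the variable-dropping heuristic.  If `(x_𝒢, y*, z_𝒢)`
satisfies the KKT conditions of the reduced quadratic program on the index set `𝒢`,
and the a-posteriori check `z_𝒱 ≥ 0` on the dropped indices `𝒱 = 𝒢ᶜ` passes, then the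
vector `x̂` obtained by padding `x_𝒢` with zeros on `𝒱` is a global minimizer of the
full quadratic program `min ½xᵀQx + cᵀx  s.t.  Ax = b, x ≥ 0`. -/
theorem dropped_variables_padding_is_global_minimizer
    {n m : ℕ} (Q : Matrix (Fin n) (Fin n) ℝ) (hQ : Q.PosSemidef)
    (c : Fin n → ℝ) (A : Matrix (Fin m) (Fin n) ℝ) (b : Fin m → ℝ)
    (G : Finset (Fin n))
    (xG : {i // i ∈ G} → ℝ) (ys : Fin m → ℝ) (zG : {i // i ∈ G} → ℝ)
    (hzG : zG = (fun i : {i // i ∈ G} => c i.1) +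
        (Q.submatrix (Subtype.val : {i // i ∈ G} → Fin n)
          (Subtype.val : {i // i ∈ G} → Fin n)) *ᵥ xG -
        (A.submatrix id (Subtype.val : {i // i ∈ G} → Fin n))ᵀ *ᵥ ys)
    (hx0 : ∀ i, 0 ≤ xG i)
    (hfeas : (A.submatrix id (Subtype.val : {i // i ∈ G} → Fin n)) *ᵥ xG = b)
    (hz0 : ∀ i, 0 ≤ zG i) (hcomp : ∀ i, xG i * zG i = 0)
    (zV : {i // i ∈ Gᶜ} → ℝ)
    (hzV : zV = (fun i : {i // i ∈ Gᶜ} => c i.1) +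
        (Q.submatrix (Subtype.val : {i // i ∈ Gᶜ} → Fin n)
          (Subtype.val : {i // i ∈ G} → Fin n)) *ᵥ xG -
        (A.submatrix id (Subtype.val : {i // i ∈ Gᶜ} → Fin n))ᵀ *ᵥ ys)
    (hzV0 : ∀ i, 0 ≤ zV i)
    (xhat : Fin n → ℝ)
    (hxhat : xhat = fun i => if h : i ∈ G then xG ⟨i, h⟩ else 0) :
    ∀ x : Fin n → ℝ, A *ᵥ x = b → (∀ i, 0 ≤ x i) →
      (1 / 2) * (xhat ⬝ᵥ (Q *ᵥ xhat)) + c ⬝ᵥ xhat ≤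
        (1 / 2) * (x ⬝ᵥ (Q *ᵥ x)) + c ⬝ᵥ x := by
  subst hzG hzV
  rw [hxhat, dite_zero_eq_extend_val]
  have padded_isMinOn := (dropped_variables_padding_is_global_minimizer_general
    (P := ⟨Q, c, A, b⟩) hQ Subtype.val_injective ⟨hx0, hfeas, hz0, hcomp⟩
    fun i hi ↦ hzV0 ⟨i, by simpa using hi⟩).2
  exact fun x hAx hx ↦ padded_isMinOn ⟨hAx, hx⟩
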